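/- Each of the nine basic W(E8)-invariant holomorphic Jacobi forms A_1, A_2, A_3, A_4, A_5, B_2, B_3, B_4, B_6 belongs to the polynomial ring ℂ[c_0, c_1, c_2, c_3, c_4, d_0, d_2, d_3, d_4, d_5, d_6]; explicitly, one has the identities A_1 = (9/2) c_1 d_0, A_2 = (3 c_0² c_1² − 8Δ c_2)/48, B_2 = (45 c_0 c_1² d_0 + 48Δ d_2)/40, and Δ = c_0³ − 27 d_0², where Δ = (E4³ − E6²)/1728. -/

import Mathlib

noncomputable section

open Complex Finset

namespace E8Jacobi

/-- π as a complex number. -/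
def πC : ℂ := Real.pi

/-- The E8 lattice as a subset of ℝ^8. -/
def E8Lattice : Set (Fin 8 → ℝ) :=
  {x | ((∀ i, ∃ n : ℤ, x i = n) ∨ (∀ i, ∃ n : ℤ, x i = n + 1/2)) ∧ ∃ m : ℤ, ∑ i, x i = 2 * m}

/-- Complexification of a real vector. -/
def cv (x : Fin 8 → ℝ) : Fin 8 → ℂ := fun i => (x i : ℂ)

/-- The dot product on ℝ^8. -/
def dotR (x y : Fin 8 → ℝ) : ℝ := ∑ i, x i * y i

/-- The dot product on ℂ^8. -/
def dotC (z w : Fin 8 → ℂ) : ℂ := ∑ i, z i * w i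

/-- The Weyl group W(E8): orthogonal matrices preserving the E8 lattice. -/
def WeylE8 : Set (Matrix (Fin 8) (Fin 8) ℝ) :=
  {M | (∀ x y, dotR (M.mulVec x) (M.mulVec y) = dotR x y) ∧
       (∀ x ∈ E8Lattice, M.mulVec x ∈ E8Lattice) ∧
       (∀ x ∈ E8Lattice, ∃ y ∈ E8Lattice, M.mulVec y = x)}

/-- The complexified (ℂ-linear) action of a real matrix on ℂ^8. -/
def actC (M : Matrix (Fin 8) (Fin 8) ℝ) (z : Fin 8 → ℂ) : Fin 8 → ℂ :=
  fun i => ∑ j, (M i j : ℂ) * z j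

/-- A W(E8)-invariant weak Jacobi form of weight `k` and index `m`. -/
structure IsWeakJacobiFormE8 (k : ℤ) (m : ℕ) (φ : ℂ → (Fin 8 → ℂ) → ℂ) : Prop where
  holo : DifferentiableOn ℂ (fun p : ℂ × (Fin 8 → ℂ) => φ p.1 p.2) {p | 0 < p.1.im}
  weyl_inv : ∀ M ∈ WeylE8, ∀ τ : ℂ, 0 < τ.im → ∀ z, φ τ (actC M z) = φ τ z
  quasi_periodic : ∀ α ∈ E8Lattice, ∀ β ∈ E8Lattice, ∀ τ : ℂ, 0 < τ.im → ∀ z,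
    φ τ (fun i => z i + τ * (α i : ℂ) + (β i : ℂ)) =
      Complex.exp (-(m : ℂ) * πC * I * (τ * dotC (cv α) (cv α) + 2 * dotC z (cv α))) * φ τ z
  modular : ∀ a b c d : ℤ, a * d - b * c = 1 → ∀ τ : ℂ, 0 < τ.im → ∀ z,
    φ (((a : ℂ) * τ + (b : ℂ)) / ((c : ℂ) * τ + (d : ℂ))) (fun i => z i / ((c : ℂ) * τ + (d : ℂ))) =
      ((c : ℂ) * τ + (d : ℂ)) ^ k *
        Complex.exp ((m : ℂ) * πC * I * (c : ℂ) / ((c : ℂ) * τ + (d : ℂ)) * dotC z z) * φ τ z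
  fourier : ∃ co : ℕ → E8Lattice → ℂ, ∀ τ : ℂ, 0 < τ.im → ∀ z,
    φ τ z = ∑' (n : ℕ) (w : E8Lattice), co n w *
      Complex.exp (2 * πC * I * dotC (cv w.1) z) * Complex.exp (2 * πC * I * τ) ^ n

/-- Membership in the ring J^{E8}_{*,*} of W(E8)-invariant weak Jacobi forms:
a finite sum of weak Jacobi forms of various weights and indices. -/
def MemJE8 (φ : ℂ → (Fin 8 → ℂ) → ℂ) : Prop :=
  ∃ (n : ℕ) (k : Fin n → ℤ) (m : Fin n → ℕ) (ψ : Fin n → ℂ → (Fin 8 → ℂ) → ℂ),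
    (∀ i, IsWeakJacobiFormE8 (k i) (m i) (ψ i)) ∧
    ∀ τ : ℂ, 0 < τ.im → ∀ z, φ τ z = ∑ i, ψ i τ z

/-- The nome q = e^{2πiτ}. -/
def qExp (τ : ℂ) : ℂ := Complex.exp (2 * πC * I * τ)

/-- The Eisenstein series E4. -/
def E4 (τ : ℂ) : ℂ :=
  1 + 240 * ∑' n : ℕ+, (n : ℂ) ^ 3 * qExp τ ^ (n : ℕ) / (1 - qExp τ ^ (n : ℕ))

/-- The Eisenstein series E6. -/
def E6 (τ : ℂ) : ℂ :=
  1 - 504 * ∑' n : ℕ+, (n : ℂ) ^ 5 * qExp τ ^ (n : ℕ) / (1 - qExp τ ^ (n : ℕ))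

/-- The modular discriminant Δ. -/
def Dl (τ : ℂ) : ℂ := (E4 τ ^ 3 - E6 τ ^ 2) / 1728

/-- The Dedekind eta function. -/
def etaF (τ : ℂ) : ℂ := Complex.exp (2 * πC * I * τ / 24) * ∏' n : ℕ, (1 - qExp τ ^ (n + 1))

/-- The theta function of the E8 lattice. -/
def Theta (τ : ℂ) (z : Fin 8 → ℂ) : ℂ :=
  ∑' w : E8Lattice, Complex.exp (πC * I * τ * dotC (cv w.1) (cv w.1) + 2 * πC * I * dotC z (cv w.1))

/-- The Jacobi theta function θ1. -/
def th1 (z τ : ℂ) : ℂ :=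
  I * ∑' n : ℤ, (-1 : ℂ) ^ n * Complex.exp (2 * πC * I * z * ((n : ℂ) - 1/2)) *
    Complex.exp (πC * I * τ * ((n : ℂ) - 1/2) ^ 2)

/-- The Jacobi theta function θ2. -/
def th2 (z τ : ℂ) : ℂ :=
  ∑' n : ℤ, Complex.exp (2 * πC * I * z * ((n : ℂ) - 1/2)) *
    Complex.exp (πC * I * τ * ((n : ℂ) - 1/2) ^ 2)

/-- The Jacobi theta function θ3. -/
def th3 (z τ : ℂ) : ℂ :=
  ∑' n : ℤ, Complex.exp (2 * πC * I * z * (n : ℂ)) * Complex.exp (πC * I * τ * (n : ℂ) ^ 2)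

/-- The Jacobi theta function θ4. -/
def th4 (z τ : ℂ) : ℂ :=
  ∑' n : ℤ, (-1 : ℂ) ^ n * Complex.exp (2 * πC * I * z * (n : ℂ)) *
    Complex.exp (πC * I * τ * (n : ℂ) ^ 2)

/-- A1 = Θ(τ,z). -/
def A1 (τ : ℂ) (z : Fin 8 → ℂ) : ℂ := Theta τ z

/-- A_m for m = 2, 3, 5. -/
def AM (m : ℕ) (τ : ℂ) (z : Fin 8 → ℂ) : ℂ :=
  ((m : ℂ) ^ 3 / ((m : ℂ) ^ 3 + 1)) *
    (Theta ((m : ℂ) * τ) (fun i => (m : ℂ) * z i) +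
      ((m : ℂ) ^ 4)⁻¹ * ∑ k ∈ Finset.range m, Theta ((τ + (k : ℂ)) / (m : ℂ)) z)

def A2 : ℂ → (Fin 8 → ℂ) → ℂ := AM 2
def A3 : ℂ → (Fin 8 → ℂ) → ℂ := AM 3
def A5 : ℂ → (Fin 8 → ℂ) → ℂ := AM 5

/-- A4 = Θ(τ,2z). -/
def A4 (τ : ℂ) (z : Fin 8 → ℂ) : ℂ := Theta τ (fun i => 2 * z i)

def ee1 (τ : ℂ) : ℂ := (th3 0 τ ^ 4 + th4 0 τ ^ 4) / 12
def ee2 (τ : ℂ) : ℂ := (th2 0 τ ^ 4 - th4 0 τ ^ 4) / 12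
def ee3 (τ : ℂ) : ℂ := (-th2 0 τ ^ 4 - th3 0 τ ^ 4) / 12
def h0 (τ : ℂ) : ℂ := th3 0 (2*τ) * th3 0 (6*τ) + th2 0 (2*τ) * th2 0 (6*τ)

def B2 (τ : ℂ) (z : Fin 8 → ℂ) : ℂ :=
  (32/5) * (ee1 τ * Theta (2*τ) (fun i => 2 * z i)
    + (1/2^4) * ee3 τ * Theta (τ/2) z + (1/2^4) * ee2 τ * Theta ((τ+1)/2) z)

def B3 (τ : ℂ) (z : Fin 8 → ℂ) : ℂ :=
  (81/80) * (h0 τ ^ 2 * Theta (3*τ) (fun i => 3 * z i)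
    - (1/3^5) * ∑ k ∈ Finset.range 3, h0 ((τ + (k:ℂ))/3) ^ 2 * Theta ((τ + (k:ℂ))/3) z)

def B4 (τ : ℂ) (z : Fin 8 → ℂ) : ℂ :=
  (16/15) * (th4 0 (2*τ) ^ 4 * Theta (4*τ) (fun i => 4 * z i)
    - (1/2^4) * th4 0 (2*τ) ^ 4 * Theta (τ + 1/2) (fun i => 2 * z i)
    - (1/(2^2 * 4^4)) * ∑ k ∈ Finset.range 4, th2 0 ((τ + (k:ℂ))/2) ^ 4 * Theta ((τ + (k:ℂ))/4) z)

def B6 (τ : ℂ) (z : Fin 8 → ℂ) : ℂ :=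
  (9/10) * (h0 τ ^ 2 * Theta (6*τ) (fun i => 6 * z i)
    + (1/2^4) * ∑ k ∈ Finset.range 2, h0 (τ + (k:ℂ)) ^ 2 * Theta ((3*τ + 3*(k:ℂ))/2) (fun i => 3 * z i)
    - (1/(3 * 3^4)) * ∑ k ∈ Finset.range 3, h0 ((τ + (k:ℂ))/3) ^ 2 * Theta ((2*τ + 2*(k:ℂ))/3) (fun i => 2 * z i)
    - (1/(3 * 6^4)) * ∑ k ∈ Finset.range 6, h0 ((τ + (k:ℂ))/3) ^ 2 * Theta ((τ + (k:ℂ))/6) z)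

/-- The nine basic W(E8)-invariant holomorphic Jacobi forms A1,…,A5,B2,…,B6. -/
def nineForms : Fin 9 → ℂ → (Fin 8 → ℂ) → ℂ := ![A1, A2, A3, A4, A5, B2, B3, B4, B6]

/- The basic meromorphic Jacobi forms a_i, b_j (Appendix A of the paper). -/

def a0f (τ : ℂ) (_z : Fin 8 → ℂ) : ℂ := E4 τ / 12

def a2f (τ : ℂ) (z : Fin 8 → ℂ) : ℂ :=
  6 / (E4 τ * Dl τ) * (-(E4 τ) * A2 τ z + A1 τ z ^ 2)

def a3f (τ : ℂ) (z : Fin 8 → ℂ) : ℂ :=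
  1 / (9 * E4 τ ^ 2 * Dl τ ^ 2) *
    (-7 * E4 τ ^ 2 * E6 τ * A3 τ z - 20 * E4 τ ^ 3 * B3 τ z
      - 9 * E4 τ * E6 τ * A1 τ z * A2 τ z + 30 * E4 τ ^ 2 * A1 τ z * B2 τ z
      + 6 * E6 τ * A1 τ z ^ 3)

def a4f (τ : ℂ) (z : Fin 8 → ℂ) : ℂ :=
  1 / (288 * E4 τ ^ 3 * Dl τ ^ 3) *
    (576 * E4 τ ^ 3 * Dl τ * A4 τ z + 32256 * E4 τ ^ 2 * Dl τ * A1 τ z * A3 τ z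
      - 9 * E4 τ ^ 5 * A2 τ z ^ 2 - 30 * E4 τ ^ 3 * E6 τ * A2 τ z * B2 τ z
      - 25 * E4 τ ^ 4 * B2 τ z ^ 2
      + (60 * E4 τ ^ 4 - 12 * E4 τ * E6 τ ^ 2) * A1 τ z ^ 2 * A2 τ z
      + 80 * E4 τ ^ 2 * E6 τ * A1 τ z ^ 2 * B2 τ z
      + (-70 * E4 τ ^ 3 + 6 * E6 τ ^ 2) * A1 τ z ^ 4)

def b0f (τ : ℂ) (_z : Fin 8 → ℂ) : ℂ := E6 τ / 216

def b1f (τ : ℂ) (z : Fin 8 → ℂ) : ℂ := -4 / E4 τ * A1 τ z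

def b2f (τ : ℂ) (z : Fin 8 → ℂ) : ℂ :=
  5 / (6 * E4 τ ^ 2 * Dl τ) * (E4 τ ^ 2 * B2 τ z - E6 τ * A1 τ z ^ 2)

def b3f (τ : ℂ) (z : Fin 8 → ℂ) : ℂ :=
  1 / (108 * E4 τ ^ 3 * Dl τ ^ 2) *
    (-7 * E4 τ ^ 5 * A3 τ z - 20 * E4 τ ^ 3 * E6 τ * B3 τ z
      - 9 * E4 τ ^ 4 * A1 τ z * A2 τ z + 30 * E4 τ ^ 2 * E6 τ * A1 τ z * B2 τ z
      + (16 * E4 τ ^ 3 - 10 * E6 τ ^ 2) * A1 τ z ^ 3)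

def b4f (τ : ℂ) (z : Fin 8 → ℂ) : ℂ :=
  1 / (1728 * E4 τ ^ 4 * Dl τ ^ 3) *
    (-8640 * E4 τ ^ 4 * Dl τ * B4 τ z + 138240 * E4 τ ^ 3 * Dl τ * A1 τ z * B3 τ z
      + 9 * E4 τ ^ 5 * E6 τ * A2 τ z ^ 2 + 30 * E4 τ ^ 6 * A2 τ z * B2 τ z
      + 25 * E4 τ ^ 4 * E6 τ * B2 τ z ^ 2
      - 48 * E4 τ ^ 4 * E6 τ * A1 τ z ^ 2 * A2 τ z
      + (-140 * E4 τ ^ 5 + 60 * E4 τ ^ 2 * E6 τ ^ 2) * A1 τ z ^ 2 * B2 τ z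
      + (74 * E4 τ ^ 3 * E6 τ - 10 * E6 τ ^ 3) * A1 τ z ^ 4)

def b5f (τ : ℂ) (z : Fin 8 → ℂ) : ℂ :=
  1 / (72 * E4 τ ^ 5 * Dl τ ^ 3) *
    (-36288 * E4 τ ^ 4 * Dl τ * A5 τ z - 294 * E4 τ ^ 6 * A2 τ z * A3 τ z
      - 770 * E4 τ ^ 4 * E6 τ * B2 τ z * A3 τ z - 840 * E4 τ ^ 4 * E6 τ * A2 τ z * B3 τ z
      - 2200 * E4 τ ^ 5 * B2 τ z * B3 τ z + 168 * E4 τ ^ 5 * A1 τ z ^ 2 * A3 τ z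
      + 480 * E4 τ ^ 3 * E6 τ * A1 τ z ^ 2 * B3 τ z - 621 * E4 τ ^ 5 * A1 τ z * A2 τ z ^ 2
      + 3525 * E4 τ ^ 4 * A1 τ z * B2 τ z ^ 2 + 1224 * E4 τ ^ 4 * A1 τ z ^ 3 * A2 τ z
      - 240 * E4 τ ^ 2 * E6 τ * A1 τ z ^ 3 * B2 τ z
      + (-456 * E4 τ ^ 3 + 24 * E6 τ ^ 2) * A1 τ z ^ 5)

def b6f (τ : ℂ) (z : Fin 8 → ℂ) : ℂ :=
  1 / (4478976 * E4 τ ^ 6 * Dl τ ^ 5) *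
    (-19906560 * E4 τ ^ 6 * Dl τ ^ 2 * B6 τ z
      - 188116992 * E4 τ ^ 4 * E6 τ * Dl τ ^ 2 * A1 τ z * A5 τ z
      - 5184 * E4 τ ^ 7 * E6 τ * Dl τ * A2 τ z * A4 τ z
      - 8640 * E4 τ ^ 8 * Dl τ * B2 τ z * A4 τ z
      - 103680 * E4 τ ^ 8 * Dl τ * A2 τ z * B4 τ z
      - 172800 * E4 τ ^ 6 * E6 τ * Dl τ * B2 τ z * B4 τ z
      + 12672 * E4 τ ^ 6 * E6 τ * Dl τ * A1 τ z ^ 2 * A4 τ z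
      + 17280 * (5 * E4 τ ^ 7 + 9 * E4 τ ^ 4 * E6 τ ^ 2) * Dl τ * A1 τ z ^ 2 * B4 τ z
      + 112896 * E4 τ ^ 7 * E6 τ * Dl τ * A3 τ z ^ 2
      + 645120 * E4 τ ^ 8 * Dl τ * A3 τ z * B3 τ z
      + 921600 * E4 τ ^ 6 * E6 τ * Dl τ * B3 τ z ^ 2
      - 1717632 * E4 τ ^ 6 * E6 τ * Dl τ * A1 τ z * A2 τ z * A3 τ z
      - 362880 * (4 * E4 τ ^ 7 + 11 * E4 τ ^ 4 * E6 τ ^ 2) * Dl τ * A1 τ z * B2 τ z * A3 τ z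
      + 483840 * (4 * E4 τ ^ 7 - 9 * E4 τ ^ 4 * E6 τ ^ 2) * Dl τ * A1 τ z * A2 τ z * B3 τ z
      - 11404800 * E4 τ ^ 5 * E6 τ * Dl τ * A1 τ z * B2 τ z * B3 τ z
      + 1161216 * E4 τ ^ 5 * E6 τ * Dl τ * A1 τ z ^ 3 * A3 τ z
      - 92160 * (37 * E4 τ ^ 6 - 9 * E4 τ ^ 3 * E6 τ ^ 2) * Dl τ * A1 τ z ^ 3 * B3 τ z
      + (135 * E4 τ ^ 9 * E6 τ + 54 * E4 τ ^ 6 * E6 τ ^ 3) * A2 τ z ^ 3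
      + (405 * E4 τ ^ 10 + 540 * E4 τ ^ 7 * E6 τ ^ 2) * A2 τ z ^ 2 * B2 τ z
      + 1575 * E4 τ ^ 8 * E6 τ * A2 τ z * B2 τ z ^ 2
      + (375 * E4 τ ^ 9 + 500 * E4 τ ^ 6 * E6 τ ^ 2) * B2 τ z ^ 3
      + (-3159 * E4 τ ^ 8 * E6 τ + 1701 * E4 τ ^ 5 * E6 τ ^ 3) * A1 τ z ^ 2 * A2 τ z ^ 2
      + (-3060 * E4 τ ^ 9 - 1800 * E4 τ ^ 6 * E6 τ ^ 2) * A1 τ z ^ 2 * A2 τ z * B2 τ z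
      + (6975 * E4 τ ^ 7 * E6 τ - 11025 * E4 τ ^ 4 * E6 τ ^ 3) * A1 τ z ^ 2 * B2 τ z ^ 2
      + (6768 * E4 τ ^ 7 * E6 τ - 3024 * E4 τ ^ 4 * E6 τ ^ 3) * A1 τ z ^ 4 * A2 τ z
      + (4260 * E4 τ ^ 8 + 1800 * E4 τ ^ 5 * E6 τ ^ 2 + 180 * E4 τ ^ 2 * E6 τ ^ 4) * A1 τ z ^ 4 * B2 τ z
      + (-3692 * E4 τ ^ 6 * E6 τ + 504 * E4 τ ^ 3 * E6 τ ^ 3 - 12 * E6 τ ^ 5) * A1 τ z ^ 6)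

/-- The Seiberg–Witten coefficients a_0, …, a_4 (a_1 = 0). -/
def aSW : ℕ → ℂ → (Fin 8 → ℂ) → ℂ
  | 0 => a0f
  | 2 => a2f
  | 3 => a3f
  | 4 => a4f
  | _ => fun _ _ => 0

/-- The Seiberg–Witten coefficients b_0, …, b_6. -/
def bSW : ℕ → ℂ → (Fin 8 → ℂ) → ℂ
  | 0 => b0f
  | 1 => b1f
  | 2 => b2f
  | 3 => b3f
  | 4 => b4f
  | 5 => b5f
  | 6 => b6f
  | _ => fun _ _ => 0

/-- The translation parameter −b₁/(6b₀). -/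
def uShift (τ : ℂ) (z : Fin 8 → ℂ) : ℂ := -(bSW 1 τ z) / (6 * bSW 0 τ z)

/-- The coefficients c_i. -/
def cSW (i : ℕ) (τ : ℂ) (z : Fin 8 → ℂ) : ℂ :=
  ∑ j ∈ Finset.range (i+1), aSW j τ z * (Nat.choose (4-j) (4-i) : ℂ) * uShift τ z ^ (i-j)

/-- The coefficients d_j. -/
def dSW (j : ℕ) (τ : ℂ) (z : Fin 8 → ℂ) : ℂ :=
  ∑ l ∈ Finset.range (j+1), bSW l τ z * (Nat.choose (6-l) (6-j) : ℂ) * uShift τ z ^ (j-l)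

/-- Points of the upper half-plane avoiding the zeros of E4, E6 and Δ
(where all the meromorphic Jacobi forms above are defined). -/
def GoodTau (τ : ℂ) : Prop := 0 < τ.im ∧ E4 τ ≠ 0 ∧ E6 τ ≠ 0 ∧ Dl τ ≠ 0

/-- The eleven generators a_0, a_2, a_3, a_4, b_0, …, b_6 of R. -/
def abGens : Fin 11 → ℂ → (Fin 8 → ℂ) → ℂ :=
  ![aSW 0, aSW 2, aSW 3, aSW 4, bSW 0, bSW 1, bSW 2, bSW 3, bSW 4, bSW 5, bSW 6]

/-- The eleven generators c_0, …, c_4, d_0, d_2, …, d_6 of R̃. -/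
def cdGens : Fin 11 → ℂ → (Fin 8 → ℂ) → ℂ :=
  ![cSW 0, cSW 1, cSW 2, cSW 3, cSW 4, dSW 0, dSW 2, dSW 3, dSW 4, dSW 5, dSW 6]

/-- Membership in the polynomial ring R = ℂ[a_0,a_2,a_3,a_4,b_0,…,b_6]
(as meromorphic functions on ℍ × ℂ^8). -/
def MemR (φ : ℂ → (Fin 8 → ℂ) → ℂ) : Prop :=
  ∃ P : MvPolynomial (Fin 11) ℂ, ∀ τ : ℂ, GoodTau τ → ∀ z,
    φ τ z = MvPolynomial.eval (fun i => abGens i τ z) P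

/-- Membership in the polynomial ring R̃ = ℂ[c_0,…,c_4,d_0,d_2,…,d_6]
(as meromorphic functions on ℍ × ℂ^8). -/
def MemRt (φ : ℂ → (Fin 8 → ℂ) → ℂ) : Prop :=
  ∃ P : MvPolynomial (Fin 11) ℂ, ∀ τ : ℂ, GoodTau τ → ∀ z,
    φ τ z = MvPolynomial.eval (fun i => cdGens i τ z) P

/- Invariant theory of binary forms. -/

/-- `BinTrans n T α α'` says that `α'` is the coefficient family of the degree-`n`
binary form with coefficients `α` transformed by `T ∈ SL2(ℂ)`. -/
def BinTrans (n : ℕ) (T : Matrix (Fin 2) (Fin 2) ℂ) (α α' : ℕ → ℂ) : Prop :=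
  ∀ u v : ℂ,
    ∑ j ∈ Finset.range (n+1), α' j * u ^ (n - j) * v ^ j
      = ∑ i ∈ Finset.range (n+1), α i * (T 0 0 * u + T 0 1 * v) ^ (n - i) *
          (T 1 0 * u + T 1 1 * v) ^ i

/-- Variables for polynomials in the coefficients of a binary quartic and sextic. -/
abbrev SV := Fin 5 ⊕ Fin 7

/-- Evaluation of a polynomial in the coefficients of the quartic and sextic. -/
def evalSV (Φ : MvPolynomial SV ℂ) (α β : ℕ → ℂ) : ℂ :=
  MvPolynomial.eval (Sum.elim (fun i : Fin 5 => α i.1) (fun j : Fin 7 => β j.1)) Φ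

/-- Membership in the ring of joint semiinvariants ℂ[V4 ⊕ V6]^{U2(ℂ)}. -/
def IsSemiinvRingElem (Φ : MvPolynomial SV ℂ) : Prop :=
  ∀ κ : ℂ, ∀ α α' β β' : ℕ → ℂ,
    BinTrans 4 !![1, κ; 0, 1] α α' → BinTrans 6 !![1, κ; 0, 1] β β' →
      evalSV Φ α' β' = evalSV Φ α β

/-- Membership in the ring of joint invariants ℂ[V4 ⊕ V6]^{SL2(ℂ)}. -/
def IsInvRingElem (Φ : MvPolynomial SV ℂ) : Prop :=
  ∀ T : Matrix (Fin 2) (Fin 2) ℂ, T.det = 1 → ∀ α α' β β' : ℕ → ℂ,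
    BinTrans 4 T α α' → BinTrans 6 T β β' → evalSV Φ α' β' = evalSV Φ α β

/-- Variables for joint covariants: coefficients of the two forms together with (u,v). -/
abbrev CVV := (Fin 5 ⊕ Fin 7) ⊕ Fin 2

/-- Evaluation of a polynomial in the coefficients and (u,v). -/
def evalCov (Ψ : MvPolynomial CVV ℂ) (α β : ℕ → ℂ) (u v : ℂ) : ℂ :=
  MvPolynomial.eval
    (Sum.elim (Sum.elim (fun i : Fin 5 => α i.1) (fun j : Fin 7 => β j.1))
      (fun p : Fin 2 => if p = 0 then u else v)) Ψ

/-- Membership in the ring of joint covariants ℂ[V4 ⊕ V6 ⊕ ℂ²]^{SL2(ℂ)}. -/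
def IsCovRingElem (Ψ : MvPolynomial CVV ℂ) : Prop :=
  ∀ T : Matrix (Fin 2) (Fin 2) ℂ, T.det = 1 → ∀ α α' β β' : ℕ → ℂ,
    BinTrans 4 T α α' → BinTrans 6 T β β' → ∀ u v : ℂ,
      evalCov Ψ α' β' u v = evalCov Ψ α β (T 0 0 * u + T 0 1 * v) (T 1 0 * u + T 1 1 * v)

/-- â_i in ℂ[α, β, α₀⁻¹]. -/
def ahat (α : ℕ → ℂ) (i : ℕ) : ℂ :=
  ∑ j ∈ Finset.range (i+1), α j * (Nat.choose (4-j) (4-i) : ℂ) * (-(α 1)/(4 * α 0)) ^ (i-j)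

/-- b̂_i in ℂ[α, β, α₀⁻¹]. -/
def bhat (α β : ℕ → ℂ) (i : ℕ) : ℂ :=
  ∑ j ∈ Finset.range (i+1), β j * (Nat.choose (6-j) (6-i) : ℂ) * (-(α 1)/(4 * α 0)) ^ (i-j)

/-- ĉ_i in ℂ[α, β, β₀⁻¹]. -/
def chat (α β : ℕ → ℂ) (i : ℕ) : ℂ :=
  ∑ j ∈ Finset.range (i+1), α j * (Nat.choose (4-j) (4-i) : ℂ) * (-(β 1)/(6 * β 0)) ^ (i-j)

/-- d̂_i in ℂ[α, β, β₀⁻¹]. -/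
def dhat (β : ℕ → ℂ) (i : ℕ) : ℂ :=
  ∑ j ∈ Finset.range (i+1), β j * (Nat.choose (6-j) (6-i) : ℂ) * (-(β 1)/(6 * β 0)) ^ (i-j)

/-- The images of the eleven generators of R under ψ. -/
def hatGens (α β : ℕ → ℂ) : Fin 11 → ℂ :=
  ![ahat α 0, ahat α 2, ahat α 3, ahat α 4, bhat α β 0, bhat α β 1, bhat α β 2,
    bhat α β 3, bhat α β 4, bhat α β 5, bhat α β 6]

/-- The images of the eleven generators of R̃ under ψ̃. -/
def cdhatGens (α β : ℕ → ℂ) : Fin 11 → ℂ :=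
  ![chat α β 0, chat α β 1, chat α β 2, chat α β 3, chat α β 4, dhat β 0, dhat β 2,
    dhat β 3, dhat β 4, dhat β 5, dhat β 6]

/-- Weights picking out the a-variables among the eleven generators. -/
def wA : Fin 11 → ℕ := ![1, 1, 1, 1, 0, 0, 0, 0, 0, 0, 0]

/-- Weights picking out the b-variables among the eleven generators. -/
def wB : Fin 11 → ℕ := ![0, 0, 0, 0, 1, 1, 1, 1, 1, 1, 1]

/-- Weights picking out the α-variables. -/
def wSVα : SV → ℕ := Sum.elim (fun _ => 1) (fun _ => 0)

/-- Weights picking out the β-variables. -/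
def wSVβ : SV → ℕ := Sum.elim (fun _ => 0) (fun _ => 1)

/-- A joint semiinvariant of the quartic and sextic, of degrees (da, db) and order ω. -/
def IsSemiinvOf (Φ : MvPolynomial SV ℂ) (da db : ℕ) (ω : ℤ) : Prop :=
  MvPolynomial.IsWeightedHomogeneous wSVα Φ da ∧
  MvPolynomial.IsWeightedHomogeneous wSVβ Φ db ∧
  IsSemiinvRingElem Φ ∧
  ∀ l : ℂ, l ≠ 0 → ∀ α α' β β' : ℕ → ℂ,
    BinTrans 4 !![l, 0; 0, l⁻¹] α α' → BinTrans 6 !![l, 0; 0, l⁻¹] β β' →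
      evalSV Φ α' β' = l ^ ω * evalSV Φ α β

/-- Substitution α_i ↦ a_i (with a_1 = 0), β_j ↦ b_j into a polynomial in (α, β). -/
def subAB (Φ : MvPolynomial SV ℂ) : ℂ → (Fin 8 → ℂ) → ℂ :=
  fun τ z => MvPolynomial.eval
    (Sum.elim (fun i : Fin 5 => aSW i.1 τ z) (fun j : Fin 7 => bSW j.1 τ z)) Φ

/-- The graph of the map ψ_J : a Jacobi form φ = Q(a_i, b_j) is sent to the
polynomial Φ = Q(â_i, b̂_j). -/
def PsiJRel (φ : ℂ → (Fin 8 → ℂ) → ℂ) (Φ : MvPolynomial SV ℂ) : Prop :=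
  ∃ Q : MvPolynomial (Fin 11) ℂ,
    (∀ τ : ℂ, GoodTau τ → ∀ z, φ τ z = MvPolynomial.eval (fun i => abGens i τ z) Q) ∧
    (∀ α β : ℕ → ℂ, α 0 ≠ 0 → evalSV Φ α β = MvPolynomial.eval (hatGens α β) Q)

section Polynomials

open MvPolynomial

local notation "c₀" => (X 0 : MvPolynomial (Fin 11) ℂ)
local notation "c₁" => (X 1 : MvPolynomial (Fin 11) ℂ)
local notation "c₂" => (X 2 : MvPolynomial (Fin 11) ℂ)
local notation "c₃" => (X 3 : MvPolynomial (Fin 11) ℂ)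
local notation "c₄" => (X 4 : MvPolynomial (Fin 11) ℂ)
local notation "d₀" => (X 5 : MvPolynomial (Fin 11) ℂ)
local notation "d₂" => (X 6 : MvPolynomial (Fin 11) ℂ)
local notation "d₃" => (X 7 : MvPolynomial (Fin 11) ℂ)
local notation "d₄" => (X 8 : MvPolynomial (Fin 11) ℂ)
local notation "d₅" => (X 9 : MvPolynomial (Fin 11) ℂ)
local notation "d₆" => (X 10 : MvPolynomial (Fin 11) ℂ)

/-- The discriminant Δ as a polynomial in the generators of R̃. -/
def polyDl : MvPolynomial (Fin 11) ℂ := c₀ ^ 3 - 27 * d₀ ^ 2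

local notation "𝔡" => polyDl

/-- A₁ as a polynomial in the generators of R̃. -/
def polyA1 : MvPolynomial (Fin 11) ℂ := C (9 / 2) * (c₁ * d₀)

/-- A₂ as a polynomial in the generators of R̃. -/
def polyA2 : MvPolynomial (Fin 11) ℂ :=
  C (1 / 48) * (
    -8 * 𝔡 * c₂
      + 3 * c₀ ^ 2 * c₁ ^ 2)

/-- B₂ as a polynomial in the generators of R̃. -/
def polyB2 : MvPolynomial (Fin 11) ℂ :=
  C (1 / 40) * (
    48 * 𝔡 * d₂
      + 45 * c₀ * c₁ ^ 2 * d₀)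

/-- A₃ as a polynomial in the generators of R̃. -/
def polyA3 : MvPolynomial (Fin 11) ℂ :=
  C (1 / 896) * (
    -48 * 𝔡 * (2 * c₀ * d₃ - 2 * c₁ * d₂ - 3 * c₃ * d₀)
      + 21 * c₀ * c₁ ^ 3 * d₀)

/-- B₃ as a polynomial in the generators of R̃. -/
def polyB3 : MvPolynomial (Fin 11) ℂ :=
  C (1 / 640) * (
    -3 * 𝔡 * (8 * c₀ ^ 2 * c₃ - 4 * c₀ * c₁ * c₂ + c₁ ^ 3 - 144 * d₀ * d₃)
      + 270 * c₁ ^ 3 * d₀ ^ 2)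

/-- A₄ as a polynomial in the generators of R̃. -/
def polyA4 : MvPolynomial (Fin 11) ℂ :=
  C (1 / 1024) * (
    512 * 𝔡 ^ 2 * c₄
      - 𝔡 * (128 * c₀ ^ 2 * c₁ * c₃ - 64 * c₀ ^ 2 * c₂ ^ 2 + 16 * c₀ * c₁ ^ 2 * c₂
      - 768 * c₀ * d₂ ^ 2 - 3 * c₁ ^ 4 - 2304 * c₁ * d₀ * d₃ + 2304 * c₂ * d₀ * d₂)
      + 9 * c₁ ^ 4 * d₀ ^ 2)

/-- B₄ as a polynomial in the generators of R̃. -/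
def polyB4 : MvPolynomial (Fin 11) ℂ :=
  C (1 / 2560) * (
    -512 * 𝔡 ^ 2 * d₄
      + 32 * 𝔡 * (12 * c₀ ^ 2 * c₁ * d₃ - 8 * c₀ ^ 2 * c₂ * d₂ - 3 * c₀ * c₁ ^ 2 * d₂
      - 18 * c₀ * c₁ * c₃ * d₀ + 6 * c₀ * c₂ ^ 2 * d₀ - 3 * c₁ ^ 2 * c₂ * d₀
      + 72 * d₀ * d₂ ^ 2)
      + 15 * c₀ ^ 2 * c₁ ^ 4 * d₀)

/-- A₅ as a polynomial in the generators of R̃. -/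
def polyA5 : MvPolynomial (Fin 11) ℂ :=
  C (1 / 172032) * (
    -512 * 𝔡 ^ 2 * (8 * c₀ * d₅ - 4 * c₁ * d₄ + 7 * c₂ * d₃ - 11 * c₃ * d₂)
      + 32 * 𝔡 * (18 * c₀ ^ 2 * c₁ ^ 2 * d₃ + 24 * c₀ ^ 2 * c₁ * c₂ * d₂ - 12 * c₀ * c₁ ^ 3 * d₂
      + 165 * c₀ * c₁ ^ 2 * c₃ * d₀ - 54 * c₀ * c₁ * c₂ ^ 2 * d₀
      - 7 * c₁ ^ 3 * c₂ * d₀ + 216 * c₁ * d₀ * d₂ ^ 2)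
      + 21 * c₀ ^ 2 * c₁ ^ 5 * d₀)

/-- B₆ as a polynomial in the generators of R̃. -/
def polyB6 : MvPolynomial (Fin 11) ℂ :=
  C (1 / 163840) * (
    -36864 * 𝔡 ^ 3 * d₆
      + 64 * 𝔡 ^ 2 * (144 * c₀ ^ 2 * c₁ * d₅ - 64 * c₀ ^ 2 * c₂ * d₄ + 48 * c₀ ^ 2 * c₃ * d₃
      - 96 * c₀ ^ 2 * c₄ * d₂ - 12 * c₀ * c₁ ^ 2 * d₄ + 24 * c₀ * c₁ * c₂ * d₃
      - 24 * c₀ * c₁ * c₃ * d₂ - 8 * c₀ * c₂ ^ 2 * d₂ + 144 * c₀ * c₂ * c₄ * d₀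
      - 36 * c₀ * c₃ ^ 2 * d₀ - 3 * c₁ ^ 3 * d₃ - 144 * c₁ ^ 2 * c₄ * d₀
      - 24 * c₁ * c₂ * c₃ * d₀ + 12 * c₂ ^ 3 * d₀ + 1152 * d₀ * d₂ * d₄
      - 432 * d₀ * d₃ ^ 2)
      + 3 * 𝔡 * (16 * c₀ ^ 2 * c₁ ^ 4 * d₂ + 448 * c₀ ^ 2 * c₁ ^ 3 * c₃ * d₀
      - 192 * c₀ ^ 2 * c₁ ^ 2 * c₂ ^ 2 * d₀ + 16 * c₀ * c₁ ^ 4 * c₂ * d₀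
      + 4608 * c₀ * c₁ ^ 2 * d₀ ^ 2 * d₄ - c₁ ^ 6 * d₀ - 2880 * c₁ ^ 3 * d₀ ^ 2 * d₃
      + 2304 * c₁ ^ 2 * c₂ * d₀ ^ 2 * d₂ - 6912 * c₁ ^ 2 * c₄ * d₀ ^ 3)
      + 135 * c₁ ^ 6 * d₀ ^ 3)

end Polynomials

theorem E4_eq (τ : ℂ) (z : Fin 8 → ℂ) : E4 τ = 12 * cSW 0 τ z := by
  simp [cSW, aSW, a0f]
  ring

theorem E6_eq (τ : ℂ) (z : Fin 8 → ℂ) : E6 τ = 216 * dSW 0 τ z := by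
  simp [dSW, bSW, b0f]
  ring

theorem Dl_eq (τ : ℂ) (z : Fin 8 → ℂ) : Dl τ = cSW 0 τ z ^ 3 - 27 * dSW 0 τ z ^ 2 := by
  rw [Dl, E4_eq τ z, E6_eq τ z]
  ring

theorem cSW_one (τ : ℂ) (z : Fin 8 → ℂ) : cSW 1 τ z = 4 * cSW 0 τ z * uShift τ z := by
  simp [cSW, aSW, Finset.sum_range_succ, mul_comm]

theorem aSW_two (τ : ℂ) (z : Fin 8 → ℂ) :
    aSW 2 τ z = cSW 2 τ z - 6 * cSW 0 τ z * uShift τ z ^ 2 := by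
  simp [cSW, aSW, Finset.sum_range_succ, Nat.choose]
  ring

theorem aSW_three (τ : ℂ) (z : Fin 8 → ℂ) :
    aSW 3 τ z = cSW 3 τ z - 2 * cSW 2 τ z * uShift τ z + 8 * cSW 0 τ z * uShift τ z ^ 3 := by
  simp [cSW, aSW, Finset.sum_range_succ, Nat.choose]
  ring

theorem aSW_four (τ : ℂ) (z : Fin 8 → ℂ) :
    aSW 4 τ z = cSW 4 τ z - cSW 3 τ z * uShift τ z + cSW 2 τ z * uShift τ z ^ 2
      - 3 * cSW 0 τ z * uShift τ z ^ 4 := by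
  simp [cSW, aSW, Finset.sum_range_succ, Nat.choose]
  ring

theorem bSW_one {τ : ℂ} (hτ : GoodTau τ) (z : Fin 8 → ℂ) :
    bSW 1 τ z = -6 * dSW 0 τ z * uShift τ z := by
  have h : bSW 0 τ z ≠ 0 := div_ne_zero hτ.2.2.1 (by norm_num)
  simp [dSW, uShift]
  field_simp

theorem bSW_two {τ : ℂ} (hτ : GoodTau τ) (z : Fin 8 → ℂ) :
    bSW 2 τ z = dSW 2 τ z + 15 * dSW 0 τ z * uShift τ z ^ 2 := by
  have h := bSW_one hτ z
  simp [dSW, Finset.sum_range_succ, Nat.choose] at h ⊢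
  rw [h]
  ring

theorem bSW_three {τ : ℂ} (hτ : GoodTau τ) (z : Fin 8 → ℂ) :
    bSW 3 τ z = dSW 3 τ z - 4 * dSW 2 τ z * uShift τ z - 20 * dSW 0 τ z * uShift τ z ^ 3 := by
  have h := bSW_one hτ z
  simp [dSW, Finset.sum_range_succ, Nat.choose] at h ⊢
  rw [h]
  ring

theorem bSW_four {τ : ℂ} (hτ : GoodTau τ) (z : Fin 8 → ℂ) :
    bSW 4 τ z = dSW 4 τ z - 3 * dSW 3 τ z * uShift τ z + 6 * dSW 2 τ z * uShift τ z ^ 2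
      + 15 * dSW 0 τ z * uShift τ z ^ 4 := by
  have h := bSW_one hτ z
  simp [dSW, Finset.sum_range_succ, Nat.choose] at h ⊢
  rw [h]
  ring

theorem bSW_five {τ : ℂ} (hτ : GoodTau τ) (z : Fin 8 → ℂ) :
    bSW 5 τ z = dSW 5 τ z - 2 * dSW 4 τ z * uShift τ z + 3 * dSW 3 τ z * uShift τ z ^ 2
      - 4 * dSW 2 τ z * uShift τ z ^ 3 - 6 * dSW 0 τ z * uShift τ z ^ 5 := by
  have h := bSW_one hτ z
  simp [dSW, Finset.sum_range_succ, Nat.choose] at h ⊢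
  rw [h]
  ring

theorem bSW_six {τ : ℂ} (hτ : GoodTau τ) (z : Fin 8 → ℂ) :
    bSW 6 τ z = dSW 6 τ z - dSW 5 τ z * uShift τ z + dSW 4 τ z * uShift τ z ^ 2
      - dSW 3 τ z * uShift τ z ^ 3 + dSW 2 τ z * uShift τ z ^ 4 + dSW 0 τ z * uShift τ z ^ 6 := by
  have h := bSW_one hτ z
  simp [dSW, Finset.sum_range_succ, Nat.choose] at h ⊢
  rw [h]
  ring

theorem cSW_zero_ne_zero {τ : ℂ} (hτ : GoodTau τ) (z : Fin 8 → ℂ) : cSW 0 τ z ≠ 0 :=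
  fun h => hτ.2.1 (by rw [E4_eq τ z, h, mul_zero])

theorem disc_ne_zero {τ : ℂ} (hτ : GoodTau τ) (z : Fin 8 → ℂ) :
    cSW 0 τ z ^ 3 - 27 * dSW 0 τ z ^ 2 ≠ 0 :=
  Dl_eq τ z ▸ hτ.2.2.2

theorem A1_eq_eval {τ : ℂ} (hτ : GoodTau τ) (z : Fin 8 → ℂ) :
    A1 τ z = MvPolynomial.eval (fun i => cdGens i τ z) polyA1 := by
  have hc := cSW_zero_ne_zero hτ z
  have h : b1f τ z = _ := bSW_one hτ z
  rw [b1f, E4_eq τ z] at h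
  simp only [polyA1, map_mul, MvPolynomial.eval_C, MvPolynomial.eval_X, cdGens, Matrix.cons_val,
    cSW_one]
  field_simp at h
  linear_combination -1 / 4 * h

theorem A2_eq_eval {τ : ℂ} (hτ : GoodTau τ) (z : Fin 8 → ℂ) :
    A2 τ z = MvPolynomial.eval (fun i => cdGens i τ z) polyA2 := by
  have hc := cSW_zero_ne_zero hτ z
  have hd := disc_ne_zero hτ z
  have h : a2f τ z = _ := aSW_two τ z
  simp only [a2f, Dl_eq τ z, E4_eq τ z, A1_eq_eval hτ z, polyA1, polyA2, polyDl, map_add,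
    map_sub, map_neg, map_mul, map_pow, map_ofNat, MvPolynomial.eval_C, MvPolynomial.eval_X,
    cdGens, Matrix.cons_val, cSW_one τ z] at h ⊢
  rw [div_mul_eq_mul_div, div_eq_iff (by simp [hc, hd])] at h
  refine mul_left_cancel₀ hc ?_
  linear_combination -1 / 72 * h

theorem B2_eq_eval {τ : ℂ} (hτ : GoodTau τ) (z : Fin 8 → ℂ) :
    B2 τ z = MvPolynomial.eval (fun i => cdGens i τ z) polyB2 := by
  have hc := cSW_zero_ne_zero hτ z
  have hd := disc_ne_zero hτ z
  have h : b2f τ z = _ := bSW_two hτ z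
  simp only [b2f, Dl_eq τ z, E4_eq τ z, E6_eq τ z, A1_eq_eval hτ z, polyA1, polyB2, polyDl,
    map_add, map_sub, map_mul, map_pow, map_ofNat, MvPolynomial.eval_C, MvPolynomial.eval_X,
    cdGens, Matrix.cons_val, cSW_one τ z] at h ⊢
  rw [div_mul_eq_mul_div, div_eq_iff (by simp [hc, hd])] at h
  refine mul_left_cancel₀ (pow_ne_zero 2 hc) ?_
  linear_combination 1 / 720 * h

theorem A3_eq_eval {τ : ℂ} (hτ : GoodTau τ) (z : Fin 8 → ℂ) :
    A3 τ z = MvPolynomial.eval (fun i => cdGens i τ z) polyA3 := by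
  have hc := cSW_zero_ne_zero hτ z
  have hd := disc_ne_zero hτ z
  have h : a3f τ z = _ := aSW_three τ z
  have h_b : b3f τ z = _ := bSW_three hτ z
  simp only [a3f, b3f, Dl_eq τ z, E4_eq τ z, E6_eq τ z, A1_eq_eval hτ z, A2_eq_eval hτ z,
    B2_eq_eval hτ z, polyA1, polyA2, polyB2, polyA3, polyDl, map_add, map_sub, map_neg, map_mul,
    map_pow, map_ofNat, MvPolynomial.eval_C, MvPolynomial.eval_X, cdGens, Matrix.cons_val,
    cSW_one τ z] at h h_b ⊢
  rw [div_mul_eq_mul_div, div_eq_iff (by simp [hc, hd])] at h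
  rw [div_mul_eq_mul_div, div_eq_iff (by simp [hc, hd])] at h_b
  refine mul_left_cancel₀ (mul_ne_zero (pow_ne_zero 2 hc) hd) ?_
  linear_combination 1 / 1741824 * (216 * dSW 0 τ z * h - h_b)

theorem B3_eq_eval {τ : ℂ} (hτ : GoodTau τ) (z : Fin 8 → ℂ) :
    B3 τ z = MvPolynomial.eval (fun i => cdGens i τ z) polyB3 := by
  have hc := cSW_zero_ne_zero hτ z
  have hd := disc_ne_zero hτ z
  have h : a3f τ z = _ := aSW_three τ z
  have h_b : b3f τ z = _ := bSW_three hτ z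
  simp only [a3f, b3f, Dl_eq τ z, E4_eq τ z, E6_eq τ z, A1_eq_eval hτ z, A2_eq_eval hτ z,
    B2_eq_eval hτ z, polyA1, polyA2, polyB2, polyB3, polyDl, map_add, map_sub, map_neg, map_mul,
    map_pow, map_ofNat, MvPolynomial.eval_C, MvPolynomial.eval_X, cdGens, Matrix.cons_val,
    cSW_one τ z] at h h_b ⊢
  rw [div_mul_eq_mul_div, div_eq_iff (by simp [hc, hd])] at h
  rw [div_mul_eq_mul_div, div_eq_iff (by simp [hc, hd])] at h_b
  refine mul_left_cancel₀ (mul_ne_zero (pow_ne_zero 3 hc) hd) ?_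
  linear_combination -1 / 59719680 * (1728 * cSW 0 τ z ^ 3 * h - 216 * dSW 0 τ z * h_b)

theorem A4_eq_eval {τ : ℂ} (hτ : GoodTau τ) (z : Fin 8 → ℂ) :
    A4 τ z = MvPolynomial.eval (fun i => cdGens i τ z) polyA4 := by
  have hc := cSW_zero_ne_zero hτ z
  have hd := disc_ne_zero hτ z
  have h : a4f τ z = _ := aSW_four τ z
  simp only [a4f, Dl_eq τ z, E4_eq τ z, E6_eq τ z, A1_eq_eval hτ z, A2_eq_eval hτ z,
    A3_eq_eval hτ z, B2_eq_eval hτ z, polyA1, polyA2, polyA3, polyB2, polyA4, polyDl, map_add,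
    map_sub, map_neg, map_mul, map_pow, map_ofNat, MvPolynomial.eval_C, MvPolynomial.eval_X,
    cdGens, Matrix.cons_val, cSW_one τ z] at h ⊢
  rw [div_mul_eq_mul_div, div_eq_iff (by simp [hc, hd])] at h
  refine mul_left_cancel₀ (mul_ne_zero (pow_ne_zero 3 hc) hd) ?_
  linear_combination 1 / (576 * 12 ^ 3) * h

theorem B4_eq_eval {τ : ℂ} (hτ : GoodTau τ) (z : Fin 8 → ℂ) :
    B4 τ z = MvPolynomial.eval (fun i => cdGens i τ z) polyB4 := by
  have hc := cSW_zero_ne_zero hτ z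
  have hd := disc_ne_zero hτ z
  have h : b4f τ z = _ := bSW_four hτ z
  simp only [b4f, Dl_eq τ z, E4_eq τ z, E6_eq τ z, A1_eq_eval hτ z, A2_eq_eval hτ z,
    B2_eq_eval hτ z, B3_eq_eval hτ z, polyA1, polyA2, polyB2, polyB3, polyB4, polyDl, map_add,
    map_sub, map_neg, map_mul, map_pow, map_ofNat, MvPolynomial.eval_C, MvPolynomial.eval_X,
    cdGens, Matrix.cons_val, cSW_one τ z] at h ⊢
  rw [div_mul_eq_mul_div, div_eq_iff (by simp [hc, hd])] at h
  refine mul_left_cancel₀ (mul_ne_zero (pow_ne_zero 4 hc) hd) ?_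
  linear_combination -1 / (8640 * 12 ^ 4) * h

theorem A5_eq_eval {τ : ℂ} (hτ : GoodTau τ) (z : Fin 8 → ℂ) :
    A5 τ z = MvPolynomial.eval (fun i => cdGens i τ z) polyA5 := by
  have hc := cSW_zero_ne_zero hτ z
  have hd := disc_ne_zero hτ z
  have h : b5f τ z = _ := bSW_five hτ z
  simp only [b5f, Dl_eq τ z, E4_eq τ z, E6_eq τ z, A1_eq_eval hτ z, A2_eq_eval hτ z,
    A3_eq_eval hτ z, B2_eq_eval hτ z, B3_eq_eval hτ z, polyA1, polyA2, polyA3, polyB2, polyB3,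
    polyA5, polyDl, map_add, map_sub, map_neg, map_mul, map_pow, map_ofNat, MvPolynomial.eval_C,
    MvPolynomial.eval_X, cdGens, Matrix.cons_val, cSW_one τ z] at h ⊢
  rw [div_mul_eq_mul_div, div_eq_iff (by simp [hc, hd])] at h
  refine mul_left_cancel₀ (mul_ne_zero (pow_ne_zero 4 hc) hd) ?_
  linear_combination -1 / (36288 * 12 ^ 4) * h

set_option maxHeartbeats 1000000 in
theorem B6_eq_eval {τ : ℂ} (hτ : GoodTau τ) (z : Fin 8 → ℂ) :
    B6 τ z = MvPolynomial.eval (fun i => cdGens i τ z) polyB6 := by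
  have hc := cSW_zero_ne_zero hτ z
  have hd := disc_ne_zero hτ z
  have h : b6f τ z = _ := bSW_six hτ z
  simp only [b6f, Dl_eq τ z, E4_eq τ z, E6_eq τ z, A1_eq_eval hτ z, A2_eq_eval hτ z,
    A3_eq_eval hτ z, A4_eq_eval hτ z, A5_eq_eval hτ z, B2_eq_eval hτ z, B3_eq_eval hτ z,
    B4_eq_eval hτ z, polyA1, polyA2, polyA3, polyA4, polyA5, polyB2, polyB3, polyB4, polyB6,
    polyDl, map_add, map_sub, map_neg, map_mul, map_pow, map_ofNat, MvPolynomial.eval_C,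
    MvPolynomial.eval_X, cdGens, Matrix.cons_val, cSW_one τ z] at h ⊢
  rw [div_mul_eq_mul_div, div_eq_iff (by simp [hc, hd])] at h
  refine mul_left_cancel₀ (mul_ne_zero (pow_ne_zero 6 hc) (pow_ne_zero 2 hd)) ?_
  linear_combination -1 / (19906560 * 12 ^ 6) * h

/-- The nine basic holomorphic Jacobi forms are polynomials in
c_0, …, c_4, d_0, d_2, …, d_6; explicitly A_1 = (9/2)c_1d_0,
A_2 = (3c_0²c_1² − 8Δc_2)/48, B_2 = (45c_0c_1²d_0 + 48Δd_2)/40 and Δ = c_0³ − 27d_0². -/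
theorem nineForms_in_Rt :
    (∀ i : Fin 9, MemRt (nineForms i)) ∧
    (∀ τ : ℂ, GoodTau τ → ∀ z : Fin 8 → ℂ,
      A1 τ z = (9/2) * cSW 1 τ z * dSW 0 τ z ∧
      A2 τ z = (3 * cSW 0 τ z ^ 2 * cSW 1 τ z ^ 2 - 8 * Dl τ * cSW 2 τ z) / 48 ∧
      B2 τ z = (45 * cSW 0 τ z * cSW 1 τ z ^ 2 * dSW 0 τ z + 48 * Dl τ * dSW 2 τ z) / 40 ∧
      Dl τ = cSW 0 τ z ^ 3 - 27 * dSW 0 τ z ^ 2) := by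
  refine ⟨fun i => ?_, fun τ hτ z => ⟨?_, ?_, ?_, Dl_eq τ z⟩⟩
  · fin_cases i
    exacts [⟨polyA1, fun τ hτ z => A1_eq_eval hτ z⟩, ⟨polyA2, fun τ hτ z => A2_eq_eval hτ z⟩,
      ⟨polyA3, fun τ hτ z => A3_eq_eval hτ z⟩, ⟨polyA4, fun τ hτ z => A4_eq_eval hτ z⟩,
      ⟨polyA5, fun τ hτ z => A5_eq_eval hτ z⟩, ⟨polyB2, fun τ hτ z => B2_eq_eval hτ z⟩,
      ⟨polyB3, fun τ hτ z => B3_eq_eval hτ z⟩, ⟨polyB4, fun τ hτ z => B4_eq_eval hτ z⟩,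
      ⟨polyB6, fun τ hτ z => B6_eq_eval hτ z⟩]
  · rw [A1_eq_eval hτ z]
    simp [polyA1, cdGens, mul_assoc]
  · rw [A2_eq_eval hτ z, Dl_eq τ z]
    simp [polyA2, polyDl, cdGens]
    ring
  · rw [B2_eq_eval hτ z, Dl_eq τ z]
    simp [polyB2, polyDl, cdGens]
    ring

end E8Jacobi
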